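/- Let P(u,Γ) be a generalised Markov kernel on a compact metric space X satisfying the uniform Feller and uniform irreducibility properties, and let (λ, μ, h) ∈ ℝ₊ × 𝒫(X) × C₊(X) be the triple given by the corresponding eigenvalue theorem: 𝔓h = λh, 𝔓*μ = λμ, ⟨h,μ⟩ = 1, with μ and h unique and λ^{-k}𝔓*_k ν ⇀ ⟨h,ν⟩μ for every finite non-negative measure ν. Define the Markov semigroup 𝒮_k g = λ^{-k} h^{-1} 𝔓_k(gh) on C(X). Then the measure ν = h μ (i.e. ν(dx) = h(x) μ(dx)) belongs to 𝒫(X) and is the unique stationary measure of {𝒮_k}, i.e. the unique ν' ∈ 𝒫(X) with ⟨𝒮₁ g, ν'⟩ = ⟨g, ν'⟩ for all g ∈ C(X). -/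

import Mathlib

open MeasureTheory Filter Topology
open scoped ENNReal NNReal

noncomputable section

variable {X : Type} [MetricSpace X] [CompactSpace X] [MeasurableSpace X] [BorelSpace X]

/-- The operator `𝔓 f (u) = ∫ f dP(u,·)` associated with a (generalised Markov) kernel. -/
def opP (P : X → FiniteMeasure X) (f : X → ℝ) (u : X) : ℝ :=
  ∫ v, f v ∂(P u : Measure X)

/-- Iterates `𝔓_k = 𝔓^k`. -/
def opIter (P : X → FiniteMeasure X) : ℕ → (X → ℝ) → X → ℝ
  | 0 => fun f => f
  | k + 1 => fun f => opP P (opIter P k f)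

/-- Iterated kernels `P_k(u,·)`, `P_0(u,·) = δ_u`, `P_k(u,·) = ∫ P_{k-1}(u,dv) P(v,·)`. -/
def kIter (P : X → FiniteMeasure X) : ℕ → X → Measure X
  | 0 => fun u => Measure.dirac u
  | k + 1 => fun u => (kIter P k u).bind fun v => (P v : Measure X)

/-- Iterates of the dual operator `𝔓* ν (Γ) = ∫ P(u,Γ) ν(du)`. -/
def dualIter (P : X → FiniteMeasure X) : ℕ → Measure X → Measure X
  | 0 => fun ν => ν
  | k + 1 => fun ν => (dualIter P k ν).bind fun v => (P v : Measure X)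

/-- sup-norm of a function on `X`. -/
def supN (g : X → ℝ) : ℝ := ⨆ x, |g x|

/-- A determining family: two finite non-negative Borel measures assigning equal integrals to
all members coincide. -/
def Determining (C : Set (X → ℝ)) : Prop :=
  ∀ μ ν : Measure X, IsFiniteMeasure μ → IsFiniteMeasure ν →
    (∀ f ∈ C, ∫ x, f x ∂μ = ∫ x, f x ∂ν) → μ = ν

/-- Uniform irreducibility of a generalised Markov kernel. -/
def UnifIrred (P : X → FiniteMeasure X) : Prop :=
  ∀ r : ℝ, 0 < r → ∃ m : ℕ, 1 ≤ m ∧ ∃ p : ℝ, 0 < p ∧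
    ∀ u v : X, ENNReal.ofReal p ≤ kIter P m u (Metric.closedBall v r)

/-- Uniform Feller property of a generalised Markov kernel with respect to a class `C`. -/
def UnifFeller (P : X → FiniteMeasure X) (C : Set (X → ℝ)) : Prop :=
  ∀ f ∈ C, UniformEquicontinuous fun (k : ℕ) (u : X) =>
    (supN (opIter P k f))⁻¹ * opIter P k f u

/-! The Doob transform by `h` turns `λ`-eigenmeasures of `𝔓*` into stationary measures: for every
finite measure `σ`, the measure `h σ` is stationary for `g ↦ λ⁻¹ h⁻¹ 𝔓(g h)` if and only if
`𝔓*σ = λσ`. As `h` is bounded away from `0`, every probability measure is of the form `h σ` with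
`⟨h, σ⟩ = 1`, and for an eigenmeasure the convergence `λ⁻ᵏ 𝔓*_k σ ⇀ ⟨h, σ⟩ μ` has constant left-hand
side, so that `σ = μ`. -/

theorem integrable_of_continuous {E : Type*} [TopologicalSpace E] [CompactSpace E]
    [MeasurableSpace E] [OpensMeasurableSpace E] {m : Measure E} [IsFiniteMeasure m] {f : E → ℝ}
    (hf : Continuous f) : Integrable f m :=
  (BoundedContinuousFunction.mkOfCompact ⟨f, hf⟩).integrable m

theorem measure_eq_of_forall_integral_continuous_eq {E : Type*} [TopologicalSpace E]
    [MeasurableSpace E] [BorelSpace E] [HasOuterApproxClosed E] {m n : Measure E}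
    [IsFiniteMeasure m] [IsFiniteMeasure n]
    (hmn : ∀ f : E → ℝ, Continuous f → ∫ x, f x ∂m = ∫ x, f x ∂n) : m = n :=
  ext_of_forall_integral_eq_of_IsFiniteMeasure fun f => hmn f f.continuous

theorem integral_bind_kernel {E F V : Type*} [MeasurableSpace E] [MeasurableSpace F]
    [NormedAddCommGroup V] [NormedSpace ℝ V] {κ : ProbabilityTheory.Kernel E F} {m : Measure E}
    {f : F → V} (hf : Integrable f (m.bind κ)) :
    ∫ y, f y ∂(m.bind κ) = ∫ x, ∫ y, f y ∂(κ x) ∂m := by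
  rw [Measure.comp_eq_comp_const_apply] at hf ⊢
  rw [ProbabilityTheory.Kernel.integral_comp hf, ProbabilityTheory.Kernel.const_apply]

section FellerKernel

variable {E F : Type*} [TopologicalSpace E] [MeasurableSpace E] [OpensMeasurableSpace E]
  [TopologicalSpace F] [MeasurableSpace F] [BorelSpace F] [HasOuterApproxClosed F]

theorem measurable_measure_apply_of_isClosed {P : E → FiniteMeasure F}
    (hP : Continuous P) {s : Set F} (hs : IsClosed s) :
    Measurable fun u => (P u : Measure F) s := by
  refine measurable_of_tendsto_metrizable
    (f := fun n u => ∫⁻ x, hs.apprSeq n x ∂(P u : Measure F)) (fun n => ?_)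
    (tendsto_pi_nhds.2 fun u => HasOuterApproxClosed.tendsto_lintegral_apprSeq hs (P u))
  simp_rw [← FiniteMeasure.testAgainstNN_coe_eq]
  exact ((FiniteMeasure.continuous_testAgainstNN_eval (hs.apprSeq n)).comp
    hP).measurable.coe_nnreal_ennreal

theorem measurable_coe_finiteMeasure_of_continuous {P : E → FiniteMeasure F}
    (hP : Continuous P) : Measurable fun u => (P u : Measure F) :=
  Measurable.measure_of_isPiSystem
    (BorelSpace.measurable_eq.trans borel_eq_generateFrom_isClosed) isPiSystem_isClosed
    (fun _ hs => measurable_measure_apply_of_isClosed hP hs)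
    (measurable_measure_apply_of_isClosed hP isClosed_univ)

/-- A weakly continuous family of finite measures, bundled as a Mathlib kernel, so that the
library on compositions of measures with kernels applies to it. -/
def fellerKernel (P : E → FiniteMeasure F) (hP : Continuous P) :
    ProbabilityTheory.Kernel E F where
  toFun u := P u
  measurable' := measurable_coe_finiteMeasure_of_continuous hP

instance isFiniteKernel_fellerKernel [CompactSpace E]
    (P : E → FiniteMeasure F) (hP : Continuous P) :
    ProbabilityTheory.IsFiniteKernel (fellerKernel P hP) := by
  obtain ⟨c, hc⟩ := (isCompact_range (FiniteMeasure.continuous_mass.comp hP)).bddAbove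
  refine ⟨c, ENNReal.coe_lt_top, fun u => ?_⟩
  calc (P u : Measure F) Set.univ = (P u).mass := FiniteMeasure.ennreal_mass.symm
    _ ≤ c := ENNReal.coe_le_coe.2 (hc ⟨u, rfl⟩)

theorem isFiniteMeasure_bind_of_continuous [CompactSpace E]
    {P : E → FiniteMeasure F} (hP : Continuous P) (m : Measure E) [IsFiniteMeasure m] :
    IsFiniteMeasure (m.bind fun u => (P u : Measure F)) :=
  inferInstanceAs (IsFiniteMeasure (m.bind (fellerKernel P hP)))

theorem integral_bind_of_continuous [CompactSpace E] [CompactSpace F]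
    {P : E → FiniteMeasure F} (hP : Continuous P) (m : Measure E) [IsFiniteMeasure m]
    {f : F → ℝ} (hf : Continuous f) :
    ∫ y, f y ∂(m.bind fun u => (P u : Measure F)) = ∫ u, ∫ y, f y ∂(P u : Measure F) ∂m :=
  integral_bind_kernel (κ := fellerKernel P hP) (integrable_of_continuous hf)

end FellerKernel

section Density

variable {E : Type*} [MeasurableSpace E] {m : Measure E} {h : E → ℝ}

theorem integral_withDensity_ofReal {V : Type*} [NormedAddCommGroup V] [NormedSpace ℝ V]
    (hh : Measurable h) (hnonneg : ∀ x, 0 ≤ h x) (g : E → V) :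
    ∫ x, g x ∂(m.withDensity fun x => ENNReal.ofReal (h x)) = ∫ x, h x • g x ∂m := by
  rw [integral_withDensity_eq_integral_toReal_smul hh.ennreal_ofReal
    (ae_of_all m fun _ => ENNReal.ofReal_lt_top)]
  simp only [ENNReal.toReal_ofReal (hnonneg _)]

theorem isProbabilityMeasure_withDensity_ofReal_iff (hh : Integrable h m) (hnonneg : 0 ≤ᵐ[m] h) :
    IsProbabilityMeasure (m.withDensity fun x => ENNReal.ofReal (h x)) ↔ ∫ x, h x ∂m = 1 := by
  rw [isProbabilityMeasure_iff, withDensity_apply _ MeasurableSet.univ, Measure.restrict_univ,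
    ← ofReal_integral_eq_lintegral_ofReal hh hnonneg, ENNReal.ofReal_eq_one]

theorem withDensity_ofReal_inv_withDensity_ofReal (hh : Measurable h) (hpos : ∀ x, 0 < h x) :
    (m.withDensity fun x => ENNReal.ofReal (h x)⁻¹).withDensity (fun x => ENNReal.ofReal (h x))
      = m := by
  have h_inv_pos (x : E) : 0 < (h x)⁻¹ := inv_pos.2 (hpos x)
  simpa only [← ENNReal.ofReal_inv_of_pos (h_inv_pos _), inv_inv] using
    withDensity_inv_same (μ := m) (f := fun x => ENNReal.ofReal (h x)⁻¹) hh.inv.ennreal_ofReal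
      (ae_of_all m fun x => (ENNReal.ofReal_pos.2 (h_inv_pos x)).ne')
      (ae_of_all m fun _ => ENNReal.ofReal_ne_top)

theorem exists_isFiniteMeasure_withDensity_ofReal_eq [TopologicalSpace E] [CompactSpace E]
    [OpensMeasurableSpace E] [IsFiniteMeasure m] (hh : Continuous h) (hpos : ∀ x, 0 < h x) :
    ∃ σ : Measure E, IsFiniteMeasure σ ∧ σ.withDensity (fun x => ENNReal.ofReal (h x)) = m :=
  have h_inv : Continuous fun x => (h x)⁻¹ := hh.inv₀ fun x => (hpos x).ne'
  ⟨m.withDensity fun x => ENNReal.ofReal (h x)⁻¹,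
    isFiniteMeasure_withDensity_ofReal (integrable_of_continuous h_inv).2,
    withDensity_ofReal_inv_withDensity_ofReal hh.measurable hpos⟩

end Density

section Eigenmeasure

variable {E : Type} [MeasurableSpace E]

/-- Eigenmeasures `𝔓*σ = c σ` of the dual operator of `P`. The zero measure is not excluded. -/
def IsEigenmeasure (P : E → FiniteMeasure E) (c : ℝ≥0∞) (σ : Measure E) : Prop :=
  σ.bind (fun v => (P v : Measure E)) = c • σ

variable {P : E → FiniteMeasure E} {σ : Measure E} {lam : ℝ}

theorem dualIter_succ (P : E → FiniteMeasure E) (k : ℕ) (σ : Measure E) :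
    dualIter P (k + 1) σ = (dualIter P k σ).bind fun v => (P v : Measure E) :=
  rfl

theorem IsEigenmeasure.dualIter_eq {c : ℝ≥0∞} (hσ : IsEigenmeasure P c σ) (k : ℕ) :
    dualIter P k σ = c ^ k • σ := by
  induction k with
  | zero => rw [pow_zero, one_smul, dualIter]
  | succ k ih => rw [dualIter_succ, ih, Measure.bind_smul, hσ, smul_smul, pow_succ]

theorem IsEigenmeasure.inv_pow_mul_integral_dualIter (hlam : 0 < lam)
    (hσ : IsEigenmeasure P (ENNReal.ofReal lam) σ) (g : E → ℝ) (k : ℕ) :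
    (lam ^ k)⁻¹ * ∫ x, g x ∂(dualIter P k σ) = ∫ x, g x ∂σ := by
  rw [hσ.dualIter_eq, integral_smul_measure, ENNReal.toReal_pow, ENNReal.toReal_ofReal hlam.le,
    smul_eq_mul, inv_mul_cancel_left₀ (pow_pos hlam k).ne']

variable [TopologicalSpace E] [BorelSpace E] [HasOuterApproxClosed E] [IsFiniteMeasure σ]

theorem IsEigenmeasure.eq_of_tendsto_dualIter (hlam : 0 < lam)
    (hσ : IsEigenmeasure P (ENNReal.ofReal lam) σ) {ρ : Measure E} [IsFiniteMeasure ρ]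
    (hlim : ∀ g : E → ℝ, Continuous g →
      Tendsto (fun k : ℕ => (lam ^ k)⁻¹ * ∫ x, g x ∂(dualIter P k σ)) atTop (𝓝 (∫ x, g x ∂ρ))) :
    σ = ρ := by
  simp only [hσ.inv_pow_mul_integral_dualIter hlam] at hlim
  exact measure_eq_of_forall_integral_continuous_eq fun g hg =>
    tendsto_nhds_unique tendsto_const_nhds (hlim g hg)

theorem isEigenmeasure_iff_forall_integral_opP [CompactSpace E] (hP : Continuous P)
    (hlam : 0 ≤ lam) :
    IsEigenmeasure P (ENNReal.ofReal lam) σ ↔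
      ∀ f : E → ℝ, Continuous f → ∫ u, opP P f u ∂σ = lam * ∫ x, f x ∂σ := by
  have integral_dual {f : E → ℝ} (hf : Continuous f) :
      ∫ x, f x ∂(σ.bind fun v => (P v : Measure E)) = ∫ u, opP P f u ∂σ :=
    integral_bind_of_continuous hP σ hf
  have integral_smul (f : E → ℝ) : ∫ x, f x ∂(ENNReal.ofReal lam • σ) = lam * ∫ x, f x ∂σ := by
    rw [integral_smul_measure, ENNReal.toReal_ofReal hlam, smul_eq_mul]
  refine ⟨fun hσ f hf => ?_, fun hint => ?_⟩
  · rw [← integral_dual hf, hσ, integral_smul]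
  · have := isFiniteMeasure_bind_of_continuous hP σ
    have := Measure.smul_finite σ (ENNReal.ofReal_ne_top (r := lam))
    refine measure_eq_of_forall_integral_continuous_eq fun f hf => ?_
    rw [integral_dual hf, hint f hf, integral_smul]

end Eigenmeasure

section DoobTransform

variable {E : Type} [MeasurableSpace E]

/-- The Doob transform `𝒮₁ g = λ⁻¹ h⁻¹ 𝔓(g h)` of the kernel `P`, that is, the one-step operator of
the semigroup `𝒮_k`. -/
def doobTransform (P : E → FiniteMeasure E) (lam : ℝ) (h g : E → ℝ) (u : E) : ℝ :=
  lam⁻¹ * (h u)⁻¹ * opP P (fun x => g x * h x) u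

variable {P : E → FiniteMeasure E} {lam : ℝ} {h : E → ℝ} {σ : Measure E}

theorem integral_doobTransform_withDensity (hh : Measurable h) (hpos : ∀ x, 0 < h x)
    (g : E → ℝ) :
    ∫ u, doobTransform P lam h g u ∂(σ.withDensity fun x => ENNReal.ofReal (h x))
      = lam⁻¹ * ∫ u, opP P (fun x => g x * h x) u ∂σ := by
  rw [integral_withDensity_ofReal hh fun x => (hpos x).le, ← integral_const_mul]
  refine integral_congr_ae (ae_of_all σ fun u => ?_)
  have h_ne_zero : h u ≠ 0 := (hpos u).ne'
  simp only [doobTransform, smul_eq_mul]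
  field_simp

theorem integral_doobTransform_withDensity_eq_iff (hlam : lam ≠ 0) (hh : Measurable h)
    (hpos : ∀ x, 0 < h x) (g : E → ℝ) :
    ∫ u, doobTransform P lam h g u ∂(σ.withDensity fun x => ENNReal.ofReal (h x))
        = ∫ u, g u ∂(σ.withDensity fun x => ENNReal.ofReal (h x)) ↔
      ∫ u, opP P (fun x => g x * h x) u ∂σ = lam * ∫ x, g x * h x ∂σ := by
  rw [integral_doobTransform_withDensity hh hpos,
    integral_withDensity_ofReal hh fun x => (hpos x).le, inv_mul_eq_iff_eq_mul₀ hlam]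
  simp only [smul_eq_mul, mul_comm]

variable [TopologicalSpace E]

/-- Stationarity `⟨𝒮₁ g, ν⟩ = ⟨g, ν⟩` of a measure `ν` for the Doob transform, tested on continuous
functions `g`. -/
def IsDoobStationary (P : E → FiniteMeasure E) (lam : ℝ) (h : E → ℝ) (ν : Measure E) : Prop :=
  ∀ g : E → ℝ, Continuous g → ∫ u, doobTransform P lam h g u ∂ν = ∫ u, g u ∂ν

variable [CompactSpace E] [BorelSpace E] [HasOuterApproxClosed E]

theorem isDoobStationary_withDensity_iff [IsFiniteMeasure σ] (hP : Continuous P) (hlam : 0 < lam)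
    (hcont : Continuous h) (hpos : ∀ x, 0 < h x) :
    IsDoobStationary P lam h (σ.withDensity fun x => ENNReal.ofReal (h x)) ↔
      IsEigenmeasure P (ENNReal.ofReal lam) σ := by
  have integral_iff :=
    integral_doobTransform_withDensity_eq_iff (P := P) (σ := σ) hlam.ne' hcont.measurable hpos
  rw [isEigenmeasure_iff_forall_integral_opP hP hlam.le]
  refine ⟨fun hstat f hf => ?_, fun hint g hg => (integral_iff g).2 (hint _ (hg.mul hcont))⟩
  have div_mul_self (x : E) : f x / h x * h x = f x := div_mul_cancel₀ (f x) (hpos x).ne'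
  have hdiv : Continuous fun x => f x / h x := hf.div hcont fun x => (hpos x).ne'
  simpa only [div_mul_self] using (integral_iff fun x => f x / h x).1 (hstat _ hdiv)

theorem statement12_general (hFeller : Continuous P) (hlam : 0 < lam) (μ : ProbabilityMeasure E)
    (hcont : Continuous h) (hpos : ∀ x, 0 < h x) (hnorm : ∫ x, h x ∂(μ : Measure E) = 1)
    (heigμ : IsEigenmeasure P (ENNReal.ofReal lam) μ)
    (hconv : ∀ ν : Measure E, IsFiniteMeasure ν → ∀ g : E → ℝ, Continuous g →
      Tendsto (fun k : ℕ => (lam ^ k)⁻¹ * ∫ x, g x ∂(dualIter P k ν)) atTop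
        (𝓝 ((∫ x, h x ∂ν) * ∫ x, g x ∂(μ : Measure E)))) :
    IsProbabilityMeasure ((μ : Measure E).withDensity fun x => ENNReal.ofReal (h x)) ∧
    IsDoobStationary P lam h ((μ : Measure E).withDensity fun x => ENNReal.ofReal (h x)) ∧
    ∀ ν : ProbabilityMeasure E, IsDoobStationary P lam h ν →
      (ν : Measure E) = (μ : Measure E).withDensity fun x => ENNReal.ofReal (h x) := by
  have isProbabilityMeasure_iff (σ : Measure E) [IsFiniteMeasure σ] :=
    isProbabilityMeasure_withDensity_ofReal_iff (integrable_of_continuous (m := σ) hcont)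
      (ae_of_all σ fun x => (hpos x).le)
  refine ⟨(isProbabilityMeasure_iff μ).2 hnorm,
    (isDoobStationary_withDensity_iff hFeller hlam hcont hpos).2 heigμ, fun ν hν => ?_⟩
  obtain ⟨σ, _, hσν⟩ :=
    exists_isFiniteMeasure_withDensity_ofReal_eq (m := (ν : Measure E)) hcont hpos
  rw [← hσν] at hν ⊢
  have heigσ : IsEigenmeasure P (ENNReal.ofReal lam) σ :=
    (isDoobStationary_withDensity_iff hFeller hlam hcont hpos).1 hν
  have hnormσ : ∫ x, h x ∂σ = 1 := (isProbabilityMeasure_iff σ).1 (hσν ▸ inferInstance)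
  have hσμ : σ = μ := heigσ.eq_of_tendsto_dualIter hlam fun g hg => by
    simpa only [hnormσ, one_mul] using hconv σ inferInstance g hg
  rw [hσμ]

end DoobTransform

/-- **Lemma 4.2 (uniqueness of the stationary measure of `𝒮^V`)**: given the eigen-triple
`(λ, μ, h)` of Theorem 3.1, the measure `ν = h μ` is the unique stationary measure of the
Markov semigroup `𝒮_k g = λ^{-k} h^{-1} 𝔓_k (g h)`. -/
theorem statement12 (P : X → FiniteMeasure X)
    (hFeller : Continuous P) (hnz : ∀ u, P u ≠ 0)
    (C : Set (X → ℝ))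
    (hCpos : ∀ f ∈ C, Continuous f ∧ ∀ x, 0 < f x)
    (hone : (fun _ : X => (1 : ℝ)) ∈ C)
    (hdet : Determining C)
    (hUF : UnifFeller P C)
    (hUI : UnifIrred P)
    (lam : ℝ) (hlam : 0 < lam) (μ : ProbabilityMeasure X) (h : X → ℝ)
    (hcont : Continuous h) (hpos : ∀ x, 0 < h x)
    (hnorm : (∫ x, h x ∂(μ : Measure X)) = 1)
    (heigh : ∀ u, opP P h u = lam * h u)
    (heigμ : (μ : Measure X).bind (fun v => (P v : Measure X))
        = ENNReal.ofReal lam • (μ : Measure X))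
    (hconv : ∀ ν : Measure X, IsFiniteMeasure ν → ∀ g : X → ℝ, Continuous g →
      Tendsto (fun k : ℕ => (lam ^ k)⁻¹ * ∫ x, g x ∂(dualIter P k ν)) atTop
        (𝓝 ((∫ x, h x ∂ν) * ∫ x, g x ∂(μ : Measure X)))) :
    IsProbabilityMeasure
        ((μ : Measure X).withDensity fun x => ENNReal.ofReal (h x)) ∧
    (∀ g : X → ℝ, Continuous g →
      (∫ u, lam⁻¹ * (h u)⁻¹ * opP P (fun x => g x * h x) u
          ∂((μ : Measure X).withDensity fun x => ENNReal.ofReal (h x)))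
        = ∫ u, g u ∂((μ : Measure X).withDensity fun x => ENNReal.ofReal (h x))) ∧
    ∀ ν' : ProbabilityMeasure X,
      (∀ g : X → ℝ, Continuous g →
        (∫ u, lam⁻¹ * (h u)⁻¹ * opP P (fun x => g x * h x) u ∂(ν' : Measure X))
          = ∫ u, g u ∂(ν' : Measure X)) →
      (ν' : Measure X) = (μ : Measure X).withDensity fun x => ENNReal.ofReal (h x) :=
  statement12_general hFeller hlam μ hcont hpos hnorm heigμ hconv
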